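/- Let H ⊆ binom([n],3) be a 3-graph with matching number 2 and covering number τ(H) = 6. Then |H| ≤ 56. -/

import Mathlib

/-- The matching number of a hypergraph: the largest size of a set of
pairwise disjoint edges. -/
noncomputable def matchingNumber (H : Finset (Finset ℕ)) : ℕ :=
  sSup {m | ∃ M : Finset (Finset ℕ), M ⊆ H ∧ M.card = m ∧
    (M : Set (Finset ℕ)).PairwiseDisjoint id}

/-- A hypergraph is `t`-resilient if deleting any set of at most `t`
vertices does not decrease its matching number. -/
def Resilient (t : ℕ) (H : Finset (Finset ℕ)) : Prop :=
  ∀ T : Finset ℕ, T.card ≤ t →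
    matchingNumber (H.filter fun F => Disjoint F T) = matchingNumber H

/-- `S 0, …, S (r-1)` form a pseudo sunflower with center `C`:
the `S i` are distinct, `C` is a proper subset of one of them, and the
sets `S i \ C` are pairwise disjoint. -/
def IsPseudoSunflower {r : ℕ} (S : Fin r → Finset ℕ) (C : Finset ℕ) : Prop :=
  Function.Injective S ∧ (∃ i, C ⊂ S i) ∧
    ∀ i j, i ≠ j → Disjoint (S i \ C) (S j \ C)

/-- The covering (transversal) number of a hypergraph. -/
noncomputable def coverNumber (H : Finset (Finset ℕ)) : ℕ :=
  sInf {m | ∃ Y : Finset ℕ, Y.card = m ∧ ∀ F ∈ H, (F ∩ Y).Nonempty}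

/-!
Fix disjoint edges `A` and `B`. As `ν(H) = 2`, the edges avoiding `A` form an intersecting family,
and its covers have at least `6 - 3 = 3` points, so there are at most `10` of them (Erdős–Lovász);
the same holds for `B`. The Erdős–Lovász bound is `1 + 3 * 3`: for a fixed edge `E` of the
intersecting family, every other edge meets `E` in `{k}` or in `E \ {k}` for some `k ∈ E`, and for
each `k` at most three edges do so.

For the edges meeting both `A` and `B`, put `U = A ∪ B` and give each pair `e = {a, b}` with
`a ∈ A`, `b ∈ B` the weight `2 * #{F | e ⊆ F ⊄ U} + #{F | F ⊆ U \ e}`. Each of the nine weights is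
at most `8` and each edge meeting both `A` and `B` contributes at least `2` to their sum,
so there are at most `36` such edges.
-/

section

open Finset

variable {α : Type*} [DecidableEq α] {H K S M : Finset (Finset α)}
  {A B C D E F G P T U W Y e t : Finset α} {k x : α}

theorem card_sdiff_add_card_le_of_subset_inter (h : P ⊆ D ∩ W) : #(D \ W) + #P ≤ #D := by
  rw [← card_sdiff_add_card_inter D W]
  gcongr

omit [DecidableEq α] in
theorem card_le_card_of_subset_of_not_disjoint (hS : (S : Set (Finset α)).Sized (#P + 1))
    (hP : ∀ F ∈ S, P ⊆ F) (ht : ∀ F ∈ S, ¬Disjoint F t) (hPt : Disjoint P t) : #S ≤ #t := by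
  classical
  have hsub : S ⊆ t.image (insert · P) := fun F hF => by
    obtain ⟨x, hxF, hxt⟩ := not_disjoint_iff.1 (ht F hF)
    have hxP : x ∉ P := disjoint_right.1 hPt hxt
    exact mem_image.2 ⟨x, hxt, eq_of_subset_of_card_le (insert_subset hxF (hP F hF))
      (by rw [hS hF, card_insert_of_notMem hxP])⟩
  exact (card_le_card hsub).trans card_image_le

theorem eq_insert_insert_singleton {x y z : α} (hC : #C = 3) (hx : x ∈ C) (hy : y ∈ C) (hz : z ∈ C)
    (hxy : x ≠ y) (hxz : x ≠ z) (hyz : y ≠ z) : C = {x, y, z} := by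
  refine (eq_of_subset_of_card_le ?_ ?_).symm
  · simp only [insert_subset_iff, singleton_subset_iff]
    exact ⟨hx, hy, hz⟩
  · rw [hC, card_eq_three.2 ⟨x, y, z, hxy, hxz, hyz, rfl⟩]

theorem exists_eq_singleton_or_eq_erase (hE : #E = 3) (hT : T ⊂ E) (hne : T.Nonempty) :
    ∃ k ∈ E, T = {k} ∨ T = E.erase k := by
  have hlt : #T < 3 := hE ▸ card_lt_card hT
  have hpos : 0 < #T := hne.card_pos
  obtain hT1 | hT2 : #T = 1 ∨ #T = 2 := by omega
  · obtain ⟨k, rfl⟩ := card_eq_one.1 hT1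
    exact ⟨k, singleton_subset_iff.1 hT.1, .inl rfl⟩
  · obtain ⟨k, hk, rfl⟩ := exists_eq_insert_iff.2 ⟨hT.1, by rw [hT2, hE]⟩
    exact ⟨k, mem_insert_self k T, .inr (erase_insert hk).symm⟩

/-- `Y` is a cover (transversal) of the hypergraph `H`: it meets every edge. Lower bounds on the
covering number are stated as lower bounds on the size of all covers. -/
def IsCover (H : Finset (Finset α)) (Y : Finset α) : Prop :=
  ∀ F ∈ H, ¬Disjoint F Y

omit [DecidableEq α] in
theorem exists_disjoint_of_card_lt {m : ℕ} (hτ : ∀ Y, IsCover H Y → m ≤ #Y) (hY : #Y < m) :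
    ∃ F ∈ H, Disjoint F Y := by
  by_contra! h
  exact hY.not_ge (hτ Y h)

theorem IsCover.union_of_filter_disjoint (hY : IsCover {F ∈ H | Disjoint F A} Y) :
    IsCover H (A ∪ Y) := fun F hF hd => by
  rw [disjoint_union_right] at hd
  exact hY F (mem_filter.2 ⟨hF, hd.1⟩) hd.2

theorem IsCover.card_sdiff_lt (hU : IsCover H U) (hF : F ∈ H) : #(F \ U) < #F := by
  obtain ⟨x, hxF, hxU⟩ := not_disjoint_iff.1 (hU F hF)
  exact card_lt_card ((ssubset_iff_of_subset sdiff_subset).2 ⟨x, hxF, by simp [hxU]⟩)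

theorem isCover_biUnion_of_card_maximal (hH : ∅ ∉ H) (hM : M ⊆ H)
    (hd : (M : Set (Finset α)).PairwiseDisjoint id)
    (hmax : ∀ N ⊆ H, (N : Set (Finset α)).PairwiseDisjoint id → #N ≤ #M) :
    IsCover H (M.biUnion id) := fun F hF hFM => by
  rw [disjoint_biUnion_right] at hFM
  have hFnot : F ∉ M := fun h => hH (disjoint_self_iff_empty F |>.1 (hFM F h) ▸ hF)
  have hle : #(insert F M) ≤ #M := hmax _ (insert_subset hF hM) <| by
    rw [coe_insert]
    exact hd.insert fun G hG _ => hFM G hG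
  rw [card_insert_of_notMem hFnot] at hle
  omega

theorem isCover_union_of_disjoint (hH : ∅ ∉ H)
    (hν : ∀ M ⊆ H, (M : Set (Finset α)).PairwiseDisjoint id → #M ≤ 2) (hC : C ∈ H) (hD : D ∈ H)
    (hCD : Disjoint C D) : IsCover H (C ∪ D) := by
  have hne : C ≠ D := by
    rintro rfl
    exact hH (disjoint_self_iff_empty C |>.1 hCD ▸ hC)
  have hpair : (({C, D} : Finset (Finset α)) : Set (Finset α)).PairwiseDisjoint id := by
    rw [coe_pair]
    exact Set.pairwise_pair_of_symm.2 fun _ => hCD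
  simpa only [biUnion_insert, singleton_biUnion, id] using
    isCover_biUnion_of_card_maximal hH (insert_subset hC (singleton_subset_iff.2 hD)) hpair
      (by rwa [card_pair hne])

/-- The edges of `K` whose trace on `W` is exactly `T`. For an edge `W` of a 3-graph and `T` a
point `k` of `W`, this is the link graph of `k` outside `W`, each link pair being kept as a full
edge. -/
def edgesWithTrace (K : Finset (Finset α)) (W T : Finset α) : Finset (Finset α) :=
  {F ∈ K | F ∩ W = T}

theorem mem_edgesWithTrace : F ∈ edgesWithTrace K W T ↔ F ∈ K ∧ F ∩ W = T :=
  mem_filter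

theorem mem_of_inter_eq_singleton (h : F ∩ W = {k}) : k ∈ F :=
  mem_of_mem_inter_left (h ▸ mem_singleton_self k)

theorem eq_of_inter_eq_singleton (h : F ∩ W = {k}) (hxF : x ∈ F) (hxW : x ∈ W) : x = k :=
  mem_singleton.1 (h ▸ mem_inter.2 ⟨hxF, hxW⟩)

section Intersecting

variable (h3 : (K : Set (Finset α)).Sized 3) (hK : (K : Set (Finset α)).Intersecting)
  (hτ : ∀ Y, IsCover K Y → 3 ≤ #Y)

include hK hτ in
theorem exists_mem_edgesWithTrace_singleton (hE : E ∈ K) (hE3 : #E = 3) (hk : k ∈ E) :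
    ∃ C, C ∈ edgesWithTrace K E {k} := by
  obtain ⟨C, hC, hCE⟩ : ∃ C ∈ K, Disjoint C (E.erase k) :=
    exists_disjoint_of_card_lt hτ (by rw [card_erase_of_mem hk, hE3]; omega)
  have htrace_sub : C ∩ E ⊆ {k} := fun x hx => by
    rw [mem_inter] at hx
    by_contra hxk
    exact disjoint_left.1 hCE hx.1 (mem_erase.2 ⟨notMem_singleton.1 hxk, hx.2⟩)
  have htrace_ne : (C ∩ E).Nonempty := not_disjoint_iff_nonempty_inter.1 (hK hC hE)
  exact ⟨C, mem_edgesWithTrace.2 ⟨hC, htrace_ne.subset_singleton_iff.1 htrace_sub⟩⟩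

include h3 hK in
theorem card_filter_mem_edgesWithTrace_le (hkx : k ≠ x) (hD : D ∈ K) (hkD : k ∉ D) (hxD : x ∉ D) :
    #{F ∈ edgesWithTrace K W {k} | x ∈ F} ≤ #(D \ W) := by
  refine card_le_card_of_subset_of_not_disjoint (P := {k, x}) ?_ ?_ ?_ ?_
  · intro F hF
    rw [card_pair hkx]
    exact h3 (mem_edgesWithTrace.1 (mem_filter.1 hF).1).1
  · intro F hF
    rw [mem_filter, mem_edgesWithTrace] at hF
    exact insert_subset (mem_of_inter_eq_singleton hF.1.2) (singleton_subset_iff.2 hF.2)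
  · intro F hF
    rw [mem_filter, mem_edgesWithTrace] at hF
    obtain ⟨y, hyF, hyD⟩ := not_disjoint_iff.1 (hK hF.1.1 hD)
    refine not_disjoint_iff.2 ⟨y, hyF, mem_sdiff.2 ⟨hyD, fun hyW => hkD ?_⟩⟩
    exact eq_of_inter_eq_singleton hF.1.2 hyF hyW ▸ hyD
  · simp [hkD, hxD]

include h3 hK in
theorem card_sdiff_le_two (hE : E ∈ K) (hD : D ∈ K) : #(D \ E) ≤ 2 := by
  have hlt : #(D \ E) < #D := IsCover.card_sdiff_lt (fun _ hF => hK hF hE) hD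
  rw [h3 hD] at hlt
  omega

include h3 hK hτ in
theorem card_filter_mem_edgesWithTrace_le_two (hE : E ∈ K) (hkx : k ≠ x) :
    #{F ∈ edgesWithTrace K E {k} | x ∈ F} ≤ 2 := by
  obtain ⟨D, hD, hdisj⟩ : ∃ D ∈ K, Disjoint D {k, x} :=
    exists_disjoint_of_card_lt hτ (by rw [card_pair hkx]; omega)
  simp only [disjoint_insert_right, disjoint_singleton_right] at hdisj
  exact (card_filter_mem_edgesWithTrace_le h3 hK hkx hD hdisj.1 hdisj.2).trans
    (card_sdiff_le_two h3 hK hE hD)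

include h3 in
theorem card_sdiff_le_one {y : α} (hG : G ∈ K) (hxy : x ≠ y) (hx : x ∈ G ∩ W) (hy : y ∈ G ∩ W) :
    #(G \ W) ≤ 1 := by
  have hle : #(G \ W) + #{x, y} ≤ #G :=
    card_sdiff_add_card_le_of_subset_inter (insert_subset hx (singleton_subset_iff.2 hy))
  rw [card_pair hxy, h3 hG] at hle
  omega

include h3 hK hτ in
theorem exists_card_sdiff_insert_le_one {i j p q : α} (hE : E ∈ K) (hij : i ≠ j)
    (hkE : k ∈ E) (hkj : k ≠ j) (hC : C ∈ edgesWithTrace K E {i}) (hD : D ∈ edgesWithTrace K E {j})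
    (hpE : p ∉ E) (hpC : p ∈ C) (hpD : p ∈ D) (hqE : q ∉ E) (hqC : q ∈ C) (hqp : q ≠ p) :
    ∃ G ∈ K, k ∉ G ∧ q ∉ G ∧ #(G \ insert p E) ≤ 1 := by
  obtain ⟨hCK, hCE⟩ := mem_edgesWithTrace.1 hC
  obtain ⟨hDK, hDE⟩ := mem_edgesWithTrace.1 hD
  have hi : i ∈ C ∩ E := hCE ▸ mem_singleton_self i
  have hj : j ∈ D ∩ E := hDE ▸ mem_singleton_self j
  rw [mem_inter] at hi hj
  by_cases hqD : q ∈ D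
  · obtain ⟨G, hG, hdisj⟩ : ∃ G ∈ K, Disjoint G {k, q} :=
      exists_disjoint_of_card_lt hτ (card_le_two.trans_lt (by omega))
    simp only [disjoint_insert_right, disjoint_singleton_right] at hdisj
    refine ⟨G, hG, hdisj.1, hdisj.2, ?_⟩
    by_cases hpG : p ∈ G
    · obtain ⟨y, hyG, hyE⟩ := not_disjoint_iff.1 (hK hG hE)
      exact card_sdiff_le_one h3 hG (ne_of_mem_of_not_mem hyE hpE)
        (mem_inter.2 ⟨hyG, mem_insert_of_mem hyE⟩) (mem_inter.2 ⟨hpG, mem_insert_self p E⟩)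
    -- An edge `{c, p, q}` can only meet `G` in `c`, so `G` contains both `i` and `j`.
    · have mem_of_trace : ∀ c, ∀ X ∈ K, c ∈ X → c ∈ E → p ∈ X → q ∈ X → c ∈ G :=
        fun c X hX hcX hcE hpX hqX => by
          have hXeq : X = {c, p, q} := eq_insert_insert_singleton (h3 hX) hcX hpX hqX
            (ne_of_mem_of_not_mem hcE hpE) (ne_of_mem_of_not_mem hcE hqE) hqp.symm
          have hmeet : ¬Disjoint X G := hK hX hG
          simpa only [hXeq, disjoint_insert_left, disjoint_singleton_left, hpG, hdisj.2,
            not_false_eq_true, and_true, not_not] using hmeet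
      have hiG : i ∈ G := mem_of_trace i C hCK hi.1 hi.2 hpC hqC
      have hjG : j ∈ G := mem_of_trace j D hDK hj.1 hj.2 hpD hqD
      exact card_sdiff_le_one h3 hG hij (mem_inter.2 ⟨hiG, mem_insert_of_mem hi.2⟩)
        (mem_inter.2 ⟨hjG, mem_insert_of_mem hj.2⟩)
  · refine ⟨D, hDK, fun hkD => hkj (eq_of_inter_eq_singleton hDE hkD hkE), hqD, ?_⟩
    exact card_sdiff_le_one h3 hDK (ne_of_mem_of_not_mem hj.2 hpE)
      (mem_inter.2 ⟨hj.1, mem_insert_of_mem hj.2⟩) (mem_inter.2 ⟨hpD, mem_insert_self p E⟩)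

include h3 hK hτ in
theorem exists_forall_mem_edgesWithTrace_singleton (hE : E ∈ K) (hk : k ∈ E) :
    ∃ p ∉ E, ∃ q ∉ E, (∀ F ∈ edgesWithTrace K E {k}, p ∉ F → q ∈ F) ∧
      ∃ G ∈ K, k ∉ G ∧ q ∉ G ∧ #(G \ insert p E) ≤ 1 := by
  obtain ⟨i, j, hij, hErase⟩ : ∃ i j, i ≠ j ∧ E.erase k = {i, j} :=
    card_eq_two.1 (by rw [card_erase_of_mem hk, h3 hE])
  obtain ⟨hik, hiE⟩ : i ≠ k ∧ i ∈ E := mem_erase.1 (hErase ▸ mem_insert_self i {j})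
  obtain ⟨hjk, hjE⟩ : j ≠ k ∧ j ∈ E :=
    mem_erase.1 (hErase ▸ mem_insert_of_mem (mem_singleton_self j))
  obtain ⟨C, hC⟩ := exists_mem_edgesWithTrace_singleton hK hτ hE (h3 hE) hiE
  obtain ⟨D, hD⟩ := exists_mem_edgesWithTrace_singleton hK hτ hE (h3 hE) hjE
  obtain ⟨hCK, hCE⟩ := mem_edgesWithTrace.1 hC
  obtain ⟨hDK, hDE⟩ := mem_edgesWithTrace.1 hD
  obtain ⟨p, hpC, hpD⟩ := not_disjoint_iff.1 (hK hCK hDK)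
  have hpE : p ∉ E := fun hpE => hij <|
    (eq_of_inter_eq_singleton hCE hpC hpE).symm.trans (eq_of_inter_eq_singleton hDE hpD hpE)
  obtain ⟨q, hqC, hq⟩ : ∃ q ∈ C, q ∉ ({i, p} : Finset α) :=
    exists_mem_notMem_of_card_lt_card (card_le_two.trans_lt (by rw [h3 hCK]; omega))
  obtain ⟨hqi, hqp⟩ : q ≠ i ∧ q ≠ p := by simpa only [mem_insert, mem_singleton, not_or] using hq
  have hqE : q ∉ E := fun hqE => hqi (eq_of_inter_eq_singleton hCE hqC hqE)
  refine ⟨p, hpE, q, hqE, fun F hF hpF => ?_, exists_card_sdiff_insert_le_one h3 hK hτ hE hij hk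
    hjk.symm hC hD hpE hpC hpD hqE hqC hqp⟩
  obtain ⟨hFK, hFE⟩ := mem_edgesWithTrace.1 hF
  have hCeq : C = {i, p, q} := eq_insert_insert_singleton (h3 hCK) (mem_of_inter_eq_singleton hCE)
    hpC hqC (ne_of_mem_of_not_mem hiE hpE) hqi.symm hqp.symm
  have hiF : i ∉ F := fun hiF => hik (eq_of_inter_eq_singleton hFE hiF hiE)
  have hmeet : ¬Disjoint C F := hK hCK hFK
  simpa only [hCeq, disjoint_insert_left, disjoint_singleton_left, hiF, hpF, not_false_eq_true,
    true_and, not_not] using hmeet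

include h3 hK hτ in
theorem card_edgesWithTrace_singleton_le_three (hE : E ∈ K) (hk : k ∈ E) :
    #(edgesWithTrace K E {k}) ≤ 3 := by
  obtain ⟨p, hpE, q, hqE, hpq, G, hG, hkG, hqG, hGcard⟩ :=
    exists_forall_mem_edgesWithTrace_singleton h3 hK hτ hE hk
  have hthrough : #{F ∈ edgesWithTrace K E {k} | p ∈ F} ≤ 2 :=
    card_filter_mem_edgesWithTrace_le_two h3 hK hτ hE (ne_of_mem_of_not_mem hk hpE)
  have havoid : {F ∈ edgesWithTrace K E {k} | p ∉ F} ⊆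
      {F ∈ edgesWithTrace K (insert p E) {k} | q ∈ F} := fun F hF => by
    obtain ⟨hF, hpF⟩ := mem_filter.1 hF
    obtain ⟨hFK, hFE⟩ := mem_edgesWithTrace.1 hF
    refine mem_filter.2 ⟨mem_edgesWithTrace.2 ⟨hFK, ?_⟩, hpq F hF hpF⟩
    rw [inter_insert_of_notMem hpF, hFE]
  have havoid_card : #{F ∈ edgesWithTrace K E {k} | p ∉ F} ≤ 1 := (card_le_card havoid).trans <|
    (card_filter_mem_edgesWithTrace_le h3 hK (ne_of_mem_of_not_mem hk hqE) hG hkG hqG).trans hGcard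
  have hsplit := card_filter_add_card_filter_not (s := edgesWithTrace K E {k}) (p ∈ ·)
  omega

include h3 hK in
theorem exists_mem_forall_edgesWithTrace_singleton (hE : E ∈ K) (hk : k ∈ E)
    (hG : G ∈ edgesWithTrace K E (E.erase k)) :
    ∃ x ∈ G, x ∉ E ∧ ∀ F ∈ edgesWithTrace K E {k}, x ∈ F := by
  obtain ⟨hGK, hGE⟩ := mem_edgesWithTrace.1 hG
  obtain ⟨x, hx⟩ : ∃ x, G \ E = {x} := card_eq_one.1 <| by
    rw [card_sdiff, inter_comm, hGE, card_erase_of_mem hk, h3 hGK, h3 hE]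
  obtain ⟨hxG, hxE⟩ : x ∈ G ∧ x ∉ E := mem_sdiff.1 (hx ▸ mem_singleton_self x)
  refine ⟨x, hxG, hxE, fun F hF => ?_⟩
  obtain ⟨hFK, hFE⟩ := mem_edgesWithTrace.1 hF
  obtain ⟨y, hyF, hyG⟩ := not_disjoint_iff.1 (hK hFK hGK)
  have hyE : y ∉ E := fun hyE =>
    (mem_erase.1 (hGE ▸ mem_inter.2 ⟨hyG, hyE⟩)).1 (eq_of_inter_eq_singleton hFE hyF hyE)
  have hyx : y = x := mem_singleton.1 (hx ▸ mem_sdiff.2 ⟨hyG, hyE⟩)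
  exact hyx ▸ hyF

include h3 hK in
theorem card_edgesWithTrace_erase_le (hE : E ∈ K) (hk : k ∈ E)
    (hT : ∀ x, (∀ F ∈ edgesWithTrace K E {k}, x ∈ F) → x ∈ T) :
    #(edgesWithTrace K E (E.erase k)) ≤ #(T \ E) := by
  refine card_le_card_of_subset_of_not_disjoint (P := E.erase k) ?_ ?_ ?_ ?_
  · intro G hG
    rw [card_erase_of_mem hk, h3 hE]
    exact h3 (mem_edgesWithTrace.1 hG).1
  · exact fun G hG => (mem_edgesWithTrace.1 hG).2 ▸ inter_subset_left
  · intro G hG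
    obtain ⟨x, hxG, hxE, hx⟩ := exists_mem_forall_edgesWithTrace_singleton h3 hK hE hk hG
    exact not_disjoint_iff.2 ⟨x, hxG, mem_sdiff.2 ⟨hT x hx, hxE⟩⟩
  · exact disjoint_sdiff.mono_left (erase_subset k E)

include h3 hK in
theorem card_edgesWithTrace_erase_le_one (hE : E ∈ K) (hk : k ∈ E)
    (hS : 1 < #(edgesWithTrace K E {k})) : #(edgesWithTrace K E (E.erase k)) ≤ 1 := by
  obtain ⟨F, hF, G, hG, hFG⟩ := one_lt_card.1 hS
  have hle : #(edgesWithTrace K E (E.erase k)) ≤ #((F ∩ G) \ E) :=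
    card_edgesWithTrace_erase_le h3 hK hE hk fun x hx => mem_inter.2 ⟨hx F hF, hx G hG⟩
  rw [mem_edgesWithTrace] at hF hG
  have hk_mem : {k} ⊆ (F ∩ G) ∩ E := singleton_subset_iff.2 <| mem_inter.2
    ⟨mem_inter.2 ⟨mem_of_inter_eq_singleton hF.2, mem_of_inter_eq_singleton hG.2⟩, hk⟩
  have hsdiff : #((F ∩ G) \ E) + #{k} ≤ #(F ∩ G) := card_sdiff_add_card_le_of_subset_inter hk_mem
  have hinter : #(F ∩ G) < #F := card_lt_card <| inter_subset_left.ssubset_of_ne fun h =>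
    hFG (eq_of_subset_of_card_le (inter_eq_left.1 h) (by rw [h3 hF.1, h3 hG.1]))
  rw [card_singleton] at hsdiff
  rw [h3 hF.1] at hinter
  omega

include h3 hK hτ in
theorem card_edgesWithTrace_singleton_add_card_edgesWithTrace_erase_le_three (hE : E ∈ K)
    (hk : k ∈ E) : #(edgesWithTrace K E {k}) + #(edgesWithTrace K E (E.erase k)) ≤ 3 := by
  have hthree := card_edgesWithTrace_singleton_le_three h3 hK hτ hE hk
  obtain hempty | ⟨G, hG⟩ := (edgesWithTrace K E (E.erase k)).eq_empty_or_nonempty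
  · rwa [hempty, card_empty]
  obtain ⟨x, -, hxE, hx⟩ := exists_mem_forall_edgesWithTrace_singleton h3 hK hE hk hG
  have hsingleton : #(edgesWithTrace K E {k}) ≤ 2 := by
    simpa only [filter_true_of_mem hx] using
      card_filter_mem_edgesWithTrace_le_two h3 hK hτ hE (ne_of_mem_of_not_mem hk hxE)
  obtain ⟨F, hF⟩ := exists_mem_edgesWithTrace_singleton hK hτ hE (h3 hE) hk
  have herase : #(edgesWithTrace K E (E.erase k)) ≤ 2 :=
    (card_edgesWithTrace_erase_le h3 hK hE hk fun _ hx => hx F hF).trans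
      (card_sdiff_le_two h3 hK hE (mem_edgesWithTrace.1 hF).1)
  have herase_one := card_edgesWithTrace_erase_le_one h3 hK hE hk
  omega

include h3 hK hτ in
theorem card_le_ten_of_intersecting : #K ≤ 10 := by
  obtain ⟨E, hE, -⟩ : ∃ E ∈ K, Disjoint E ∅ := exists_disjoint_of_card_lt hτ (by simp)
  let traceFamily (k : α) := edgesWithTrace K E {k} ∪ edgesWithTrace K E (E.erase k)
  have hcover : K.erase E ⊆ E.biUnion traceFamily := fun F hF => by
    obtain ⟨hFE, hFK⟩ := mem_erase.1 hF
    have hne : (F ∩ E).Nonempty := not_disjoint_iff_nonempty_inter.1 (hK hFK hE)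
    have hssub : F ∩ E ⊂ E := inter_subset_right.ssubset_of_ne fun h => hFE
      (eq_of_subset_of_card_le (inter_eq_right.1 h) (by rw [h3 hFK, h3 hE])).symm
    obtain ⟨k, hk, htrace⟩ := exists_eq_singleton_or_eq_erase (h3 hE) hssub hne
    refine mem_biUnion.2 ⟨k, hk, mem_union.2 ?_⟩
    exact htrace.imp (fun h => mem_edgesWithTrace.2 ⟨hFK, h⟩)
      (fun h => mem_edgesWithTrace.2 ⟨hFK, h⟩)
  have herase : #(K.erase E) ≤ #E * 3 := (card_le_card hcover).trans <|
    card_biUnion_le_card_mul E traceFamily 3 fun k hk => (card_union_le _ _).trans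
      (card_edgesWithTrace_singleton_add_card_edgesWithTrace_erase_le_three h3 hK hτ hE hk)
  rw [card_erase_of_mem hE, h3 hE] at herase
  omega

end Intersecting

section CrossEdges

/-- The edges of `H` meeting both `A` and `B`. -/
def crossEdges (H : Finset (Finset α)) (A B : Finset α) : Finset (Finset α) :=
  {F ∈ H | ¬Disjoint F A ∧ ¬Disjoint F B}

variable (h3 : (H : Set (Finset α)).Sized 3)
  (hν : ∀ ⦃C⦄, C ∈ H → ∀ ⦃D⦄, D ∈ H → Disjoint C D → IsCover H (C ∪ D))
  (hτ : ∀ Y, IsCover H Y → 6 ≤ #Y)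

include h3 hν in
theorem card_filter_subset_not_subset_le (he : #e = 2) (heU : e ⊆ U) (hC : C ∈ H) (hD : D ∈ H)
    (hCD : Disjoint C D) (heC : Disjoint e C) (heD : Disjoint e D) :
    #{F ∈ H | e ⊆ F ∧ ¬F ⊆ U} ≤ #(C \ U) + #(D \ U) := by
  calc #{F ∈ H | e ⊆ F ∧ ¬F ⊆ U}
    _ ≤ #((C ∪ D) \ U) := by
      refine card_le_card_of_subset_of_not_disjoint (P := e) ?_ ?_ ?_ ?_
      · intro F hF
        rw [he]
        exact h3 (mem_filter.1 hF).1
      · exact fun F hF => (mem_filter.1 hF).2.1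
      · intro F hF
        obtain ⟨hFH, heF, hFU⟩ := mem_filter.1 hF
        obtain ⟨x, hxF, hxU⟩ := not_subset.1 hFU
        obtain ⟨y, hyF, hyCD⟩ := not_disjoint_iff.1 (hν hC hD hCD F hFH)
        have hye : y ∉ e := disjoint_right.1 (disjoint_union_right.2 ⟨heC, heD⟩) hyCD
        have hone : #(F \ e) ≤ 1 := by rw [card_sdiff_of_subset heF, h3 hFH, he]
        have hyx : y = x := card_le_one.1 hone y (mem_sdiff.2 ⟨hyF, hye⟩) x
          (mem_sdiff.2 ⟨hxF, fun hxe => hxU (heU hxe)⟩)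
        exact not_disjoint_iff.2 ⟨y, hyF, mem_sdiff.2 ⟨hyCD, hyx ▸ hxU⟩⟩
      · exact disjoint_sdiff.mono_left heU
    _ ≤ #(C \ U) + #(D \ U) := by
      rw [union_sdiff_distrib]
      exact card_union_le _ _

include h3 in
theorem card_filter_subset_sdiff_le_four (he : #e = 2) (heU : e ⊆ U) (hU : #U = 6) :
    #{F ∈ H | F ⊆ U \ e} ≤ 4 := by
  have hsub : {F ∈ H | F ⊆ U \ e} ⊆ powersetCard 3 (U \ e) := fun F hF =>
    mem_powersetCard.2 ⟨(mem_filter.1 hF).2, h3 (mem_filter.1 hF).1⟩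
  calc #{F ∈ H | F ⊆ U \ e}
    _ ≤ (#(U \ e)).choose 3 := by simpa only [card_powersetCard] using card_le_card hsub
    _ = 4 := by rw [card_sdiff_of_subset heU, hU, he]; rfl

include h3 hν hτ in
theorem two_mul_card_add_card_le_eight (he : #e = 2) (heU : e ⊆ U) (hU : IsCover H U)
    (hU6 : #U = 6) : 2 * #{F ∈ H | e ⊆ F ∧ ¬F ⊆ U} + #{F ∈ H | F ⊆ U \ e} ≤ 8 := by
  have sdiff_le : ∀ C ∈ H, #(C \ U) ≤ 2 := fun C hC => by
    have hlt := hU.card_sdiff_lt hC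
    rw [h3 hC] at hlt
    omega
  have exists_disjoint : ∀ C ∈ H, ∃ D ∈ H, Disjoint D (e ∪ C) := fun C hC =>
    exists_disjoint_of_card_lt hτ ((card_union_le e C).trans_lt (by rw [he, h3 hC]; omega))
  have outer_le : ∀ C ∈ H, Disjoint e C → #{F ∈ H | e ⊆ F ∧ ¬F ⊆ U} ≤ #(C \ U) + 2 :=
    fun C hC heC => by
      obtain ⟨D, hD, hdisj⟩ := exists_disjoint C hC
      rw [disjoint_union_right] at hdisj
      exact (card_filter_subset_not_subset_le h3 hν he heU hC hD hdisj.2.symm heC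
        hdisj.1.symm).trans (Nat.add_le_add_left (sdiff_le D hD) _)
  obtain hempty | ⟨G, hG⟩ := {F ∈ H | F ⊆ U \ e}.eq_empty_or_nonempty
  · obtain ⟨C, hC, hCe⟩ : ∃ C ∈ H, Disjoint C e :=
      exists_disjoint_of_card_lt hτ (by rw [he]; omega)
    have houter := outer_le C hC hCe.symm
    have hCU := sdiff_le C hC
    rw [hempty, card_empty]
    omega
  · obtain ⟨hGH, hGU⟩ := mem_filter.1 hG
    have hGsdiff : #(G \ U) = 0 := by
      rw [card_eq_zero, sdiff_eq_empty_iff_subset]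
      exact hGU.trans sdiff_subset
    have houter := outer_le G hGH (disjoint_sdiff.mono_right hGU)
    have hinner := card_filter_subset_sdiff_le_four h3 he heU hU6
    omega

theorem card_crossEdges_not_subset_le :
    #{F ∈ crossEdges H A B | ¬F ⊆ U} ≤ ∑ e ∈ A ×ˢ B, #{F ∈ H | {e.1, e.2} ⊆ F ∧ ¬F ⊆ U} := by
  refine (card_le_card fun F hF => ?_).trans card_biUnion_le
  simp only [crossEdges, mem_filter, not_disjoint_iff] at hF
  obtain ⟨⟨hFH, ⟨a, haF, haA⟩, b, hbF, hbB⟩, hFU⟩ := hF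
  refine mem_biUnion.2 ⟨(a, b), mem_product.2 ⟨haA, hbB⟩, mem_filter.2 ⟨hFH, ?_, hFU⟩⟩
  exact insert_subset haF (singleton_subset_iff.2 hbF)

theorem card_filter_subset_sdiff_pair (hF : F ⊆ A ∪ B) :
    #{e ∈ A ×ˢ B | F ⊆ (A ∪ B) \ {e.1, e.2}} = #(A \ F) * #(B \ F) := by
  rw [← card_product]
  congr 1
  ext ⟨a, b⟩
  simp only [mem_filter, mem_product, subset_sdiff, mem_sdiff, disjoint_insert_right,
    disjoint_singleton_right]
  tauto

theorem two_le_card_sdiff_mul_card_sdiff (hA : #A = 3) (hB : #B = 3) (hAB : Disjoint A B)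
    (hF : #F = 3) (hFU : F ⊆ A ∪ B) (hFA : ¬Disjoint F A) (hFB : ¬Disjoint F B) :
    2 ≤ #(A \ F) * #(B \ F) := by
  have hFsplit : #(A ∩ F) + #(B ∩ F) = 3 := by
    rw [← card_union_of_disjoint (hAB.mono inter_subset_left inter_subset_left),
      ← union_inter_distrib_right, inter_eq_right.2 hFU, hF]
  have hAsplit : #(A \ F) + #(A ∩ F) = 3 := by rw [card_sdiff_add_card_inter, hA]
  have hBsplit : #(B \ F) + #(B ∩ F) = 3 := by rw [card_sdiff_add_card_inter, hB]
  rw [disjoint_comm, not_disjoint_iff_nonempty_inter, ← card_pos] at hFA hFB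
  obtain ⟨hA', hB'⟩ | ⟨hA', hB'⟩ : (#(A \ F) = 1 ∧ #(B \ F) = 2) ∨
      (#(A \ F) = 2 ∧ #(B \ F) = 1) := by omega
  all_goals rw [hA', hB']

include h3 in
theorem two_mul_card_crossEdges_subset_le (hA : A ∈ H) (hB : B ∈ H) (hAB : Disjoint A B) :
    2 * #{F ∈ crossEdges H A B | F ⊆ A ∪ B} ≤
      ∑ e ∈ A ×ˢ B, #{F ∈ H | F ⊆ (A ∪ B) \ {e.1, e.2}} := by
  have two_le : ∀ F ∈ {F ∈ crossEdges H A B | F ⊆ A ∪ B},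
      2 ≤ #{e ∈ A ×ˢ B | F ⊆ (A ∪ B) \ {e.1, e.2}} := fun F hF => by
    simp only [crossEdges, mem_filter] at hF
    obtain ⟨⟨hFH, hFA, hFB⟩, hFU⟩ := hF
    rw [card_filter_subset_sdiff_pair hFU]
    exact two_le_card_sdiff_mul_card_sdiff (h3 hA) (h3 hB) hAB (h3 hFH) hFU hFA hFB
  calc 2 * #{F ∈ crossEdges H A B | F ⊆ A ∪ B}
    _ ≤ ∑ F ∈ crossEdges H A B with F ⊆ A ∪ B, #{e ∈ A ×ˢ B | F ⊆ (A ∪ B) \ {e.1, e.2}} := by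
      rw [mul_comm]
      exact card_nsmul_le_sum _ _ 2 two_le
    _ = ∑ e ∈ A ×ˢ B, #{F ∈ crossEdges H A B | F ⊆ A ∪ B ∧ F ⊆ (A ∪ B) \ {e.1, e.2}} := by
      simp only [← filter_filter]
      exact sum_card_bipartiteAbove_eq_sum_card_bipartiteBelow _
    _ ≤ ∑ e ∈ A ×ˢ B, #{F ∈ H | F ⊆ (A ∪ B) \ {e.1, e.2}} := by
      refine sum_le_sum fun e _ => card_le_card fun F hF => ?_
      simp only [crossEdges, mem_filter] at hF
      exact mem_filter.2 ⟨hF.1.1, hF.2.2⟩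

include h3 hν hτ in
theorem card_crossEdges_le (hA : A ∈ H) (hB : B ∈ H) (hAB : Disjoint A B) :
    #(crossEdges H A B) ≤ 36 := by
  have hU6 : #(A ∪ B) = 6 := by rw [card_union_of_disjoint hAB, h3 hA, h3 hB]
  have weight_le : ∀ e ∈ A ×ˢ B, 2 * #{F ∈ H | {e.1, e.2} ⊆ F ∧ ¬F ⊆ A ∪ B} +
      #{F ∈ H | F ⊆ (A ∪ B) \ {e.1, e.2}} ≤ 8 := fun e he => by
    obtain ⟨ha, hb⟩ := mem_product.1 he
    refine two_mul_card_add_card_le_eight h3 hν hτ (card_pair (hAB.forall_ne_finset ha hb)) ?_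
      (hν hA hB hAB) hU6
    exact insert_subset (mem_union_left B ha) (singleton_subset_iff.2 (mem_union_right A hb))
  have hsum := sum_le_card_nsmul _ _ 8 weight_le
  rw [sum_add_distrib, ← mul_sum, card_product, h3 hA, h3 hB, smul_eq_mul] at hsum
  have houter := card_crossEdges_not_subset_le (H := H) (A := A) (B := B) (U := A ∪ B)
  have hinner := two_mul_card_crossEdges_subset_le h3 hA hB hAB
  have hsplit := card_filter_add_card_filter_not (s := crossEdges H A B) (· ⊆ A ∪ B)
  omega

include h3 hν hτ in
theorem card_filter_disjoint_le (hA : A ∈ H) : #{F ∈ H | Disjoint F A} ≤ 10 := by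
  refine card_le_ten_of_intersecting ?_ ?_ ?_
  · exact fun F hF => h3 (mem_filter.1 hF).1
  · intro F hF G hG hFG
    rw [mem_coe, mem_filter] at hF hG
    exact hν hF.1 hG.1 hFG A hA (disjoint_union_right.2 ⟨hF.2.symm, hG.2.symm⟩)
  · intro Y hY
    have hcover : 6 ≤ #(A ∪ Y) := hτ _ hY.union_of_filter_disjoint
    have hunion : #(A ∪ Y) ≤ #A + #Y := card_union_le A Y
    rw [h3 hA] at hunion
    omega

end CrossEdges

omit [DecidableEq α] in
theorem stmt12_general (h3 : (H : Set (Finset α)).Sized 3)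
    (hν : ∀ M ⊆ H, (M : Set (Finset α)).PairwiseDisjoint id → #M ≤ 2)
    (hτ : ∀ Y, IsCover H Y → 6 ≤ #Y) : #H ≤ 56 := by
  classical
  have hempty : ∅ ∉ H := fun h => by simpa using h3 h
  have hcover : ∀ ⦃C⦄, C ∈ H → ∀ ⦃D⦄, D ∈ H → Disjoint C D → IsCover H (C ∪ D) :=
    fun C hC D hD hCD => isCover_union_of_disjoint hempty hν hC hD hCD
  obtain ⟨A, hA, -⟩ : ∃ A ∈ H, Disjoint A ∅ := exists_disjoint_of_card_lt hτ (by simp)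
  obtain ⟨B, hB, hBA⟩ : ∃ B ∈ H, Disjoint B A :=
    exists_disjoint_of_card_lt hτ (by rw [h3 hA]; omega)
  calc #H
    _ ≤ #({F ∈ H | Disjoint F A} ∪ ({F ∈ H | Disjoint F B} ∪ crossEdges H A B)) :=
      card_le_card fun F hF => by
        simp only [crossEdges, mem_union, mem_filter]
        tauto
    _ ≤ #{F ∈ H | Disjoint F A} + (#{F ∈ H | Disjoint F B} + #(crossEdges H A B)) :=
      (card_union_le _ _).trans (Nat.add_le_add_left (card_union_le _ _) _)
    _ ≤ 10 + (10 + 36) := by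
      gcongr
      · exact card_filter_disjoint_le h3 hcover hτ hA
      · exact card_filter_disjoint_le h3 hcover hτ hB
      · exact card_crossEdges_le h3 hcover hτ hA hB hBA.symm

end

theorem card_le_matchingNumber {H M : Finset (Finset ℕ)} (hM : M ⊆ H)
    (hd : (M : Set (Finset ℕ)).PairwiseDisjoint id) : M.card ≤ matchingNumber H := by
  refine le_csSup ⟨H.card, ?_⟩ ⟨M, hM, rfl, hd⟩
  rintro m ⟨N, hN, rfl, -⟩
  exact Finset.card_le_card hN

theorem coverNumber_le_card {H : Finset (Finset ℕ)} {Y : Finset ℕ} (hY : IsCover H Y) :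
    coverNumber H ≤ Y.card :=
  Nat.sInf_le ⟨Y, rfl, fun F hF => Finset.not_disjoint_iff_nonempty_inter.1 (hY F hF)⟩

/-- A 3-graph with matching number 2 and covering number 6 has at
most 56 edges. -/
theorem stmt12 (n : ℕ) (H : Finset (Finset ℕ))
    (hH : H ⊆ (Finset.range n).powersetCard 3)
    (hν : matchingNumber H = 2) (hτ : coverNumber H = 6) :
    H.card ≤ 56 :=
  stmt12_general (fun _ hF => (Finset.mem_powersetCard.1 (hH hF)).2)
    (fun _ hM hd => hν ▸ card_le_matchingNumber hM hd) fun _ hY => hτ ▸ coverNumber_le_card hY
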